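/- For every ε > 0 there exists a constant C = C(ε) > 0 such that for every positive-definite quaternary integer-valued quadratic form R with discriminant D(R) and every real x ≥ 1, the sum of squared representation numbers satisfies ∑_{1 ≤ n ≤ x} r_R(n)² ≤ C · (x·D(R))^ε · ( x³ · D(R)^(−3/4) + x^(5/2) · D(R)^(−1/4) + x² ). -/

import Mathlib

open scoped BigOperators

/-- Value of the quadratic form with Gram matrix `A` (symmetric, even diagonal)
over any commutative ring: `Q(x) = ∑ (aᵢᵢ/2) xᵢ² + ∑_{i<j} aᵢⱼ xᵢ xⱼ`. -/
def Qval {R : Type*} [CommRing R] (A : Matrix (Fin 4) (Fin 4) ℤ) (x : Fin 4 → R) : R :=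
  (∑ i, ((A i i / 2 : ℤ) : R) * x i ^ 2) +
    ∑ i, ∑ j ∈ Finset.Ioi i, ((A i j : ℤ) : R) * (x i * x j)

/-- `A` is the Gram matrix of an integer-valued quadratic form. -/
def IsGram (A : Matrix (Fin 4) (Fin 4) ℤ) : Prop :=
  A.IsSymm ∧ ∀ i, 2 ∣ A i i

/-- The form is primitive: the gcd of its coefficients is 1. -/
def IsPrimitiveQF (A : Matrix (Fin 4) (Fin 4) ℤ) : Prop :=
  ∀ d : ℤ, (∀ i, d ∣ A i i / 2) → (∀ i j, i ≠ j → d ∣ A i j) → IsUnit d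

/-- The form is positive definite. -/
def PosDefQF (A : Matrix (Fin 4) (Fin 4) ℤ) : Prop :=
  (A.map (Int.cast : ℤ → ℝ)).PosDef

/-- `N` is the level of the form with Gram matrix `A`: the smallest positive integer
such that `N • A⁻¹` has integer entries and even diagonal. -/
def IsLevel (A : Matrix (Fin 4) (Fin 4) ℤ) (N : ℕ) : Prop :=
  0 < N ∧
    (∃ B : Matrix (Fin 4) (Fin 4) ℤ,
      B.map (Int.cast : ℤ → ℚ) = (N : ℚ) • (A.map (Int.cast : ℤ → ℚ))⁻¹ ∧ ∀ i, 2 ∣ B i i) ∧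
    ∀ M : ℕ, 0 < M →
      (∃ B : Matrix (Fin 4) (Fin 4) ℤ,
        B.map (Int.cast : ℤ → ℚ) = (M : ℚ) • (A.map (Int.cast : ℤ → ℚ))⁻¹ ∧ ∀ i, 2 ∣ B i i) →
      N ≤ M

/-- `n` is represented by the form over `ℤ`. -/
def Represented (A : Matrix (Fin 4) (Fin 4) ℤ) (n : ℕ) : Prop :=
  ∃ x : Fin 4 → ℤ, Qval A x = (n : ℤ)

/-- `n` is locally represented: representable over `ℤ_p` for every prime `p`. -/
def LocallyRepresented (A : Matrix (Fin 4) (Fin 4) ℤ) (n : ℕ) : Prop :=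
  ∀ (p : ℕ) [Fact p.Prime], ∃ x : Fin 4 → ℤ_[p], Qval A x = (n : ℤ_[p])

/-- Number of solutions of `Q(x) ≡ n mod p^k`. -/
noncomputable def localCount (A : Matrix (Fin 4) (Fin 4) ℤ) (p n k : ℕ) : ℕ :=
  Nat.card {x : Fin 4 → ZMod (p ^ k) // Qval A x = (n : ZMod (p ^ k))}

/-- The local density `β_p(Q;n)` exists and is at least `c`. -/
def DensityBound (A : Matrix (Fin 4) (Fin 4) ℤ) (p n : ℕ) (c : ℝ) : Prop :=
  ∃ β : ℝ,
    Filter.Tendsto (fun k => (localCount A p n k : ℝ) / (p : ℝ) ^ (3 * k))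
      Filter.atTop (nhds β) ∧ c ≤ β


/-- The representation number `r_R(n) = #{x ∈ ℤ⁴ : R(x) = n}`. -/
noncomputable def repCount (A : Matrix (Fin 4) (Fin 4) ℤ) (n : ℕ) : ℕ :=
  Nat.card {x : Fin 4 → ℤ // Qval A x = (n : ℤ)}

/-!
An argument of Hermite replaces the Gram matrix by an equivalent one whose form, after completing
squares, is `∑ gᵢ wᵢ²` with `gᵢ ≤ (4/3) gᵢ₊₁`, `g₀` a positive integer and `∏ gᵢ` the discriminant.
Once the last two coordinates are fixed, the vectors of a given value correspond to elements of a
given norm in `ℤ√(-Δ)`, where `Δ = g₀ g₁`, and the divisor bound leaves only `≪ (xD)^ε` of them.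
Hence each representation number is `≪ (xD)^ε ∏_{i ≥ 2} (1 + (x/gᵢ)^(1/2))`. Its square is at most
this maximum times the representation number itself, and the sum of these counts the lattice points
of an ellipsoid, at most `≪ ∏ᵢ (1 + (x/gᵢ)^(1/2))`. The product of the two bounds is `≪ x³ D^(-3/4)`
if `g₃ ≤ x` and `≪ x²` otherwise, so the middle term of the theorem is not even needed.
-/

/-! ### The divisor bound -/

section DivisorBound

variable {ε : ℝ}

lemma add_one_le_one_add_mul_of_one_add_mul_le {a k y : ℝ} (ha : 0 < a) (hk : 0 ≤ k)
    (h : 1 + k * a ≤ y) : k + 1 ≤ (1 + 1 / a) * y := by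
  calc k + 1 ≤ k + 1 + (k * a + 1 / a) := le_add_of_nonneg_right (by positivity)
    _ = (1 + 1 / a) * (1 + k * a) := by field_simp; ring
    _ ≤ (1 + 1 / a) * y := by gcongr

lemma add_one_le_mul_pow_rpow (hε : 0 < ε) {p : ℕ} (hp : 2 ≤ p) (k : ℕ) :
    (k : ℝ) + 1 ≤ (1 + 1 / (ε * Real.log 2)) * ((p : ℝ) ^ k) ^ ε := by
  refine add_one_le_one_add_mul_of_one_add_mul_le
    (mul_pos hε (Real.log_pos one_lt_two)) k.cast_nonneg ?_
  calc 1 + k * (ε * Real.log 2) ≤ Real.exp (k * Real.log 2 * ε) := by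
        linarith [Real.add_one_le_exp (k * Real.log 2 * ε)]
    _ = ((2 : ℝ) ^ k) ^ ε := by rw [Real.rpow_def_of_pos (by positivity), Real.log_pow]
    _ ≤ ((p : ℝ) ^ k) ^ ε := by gcongr; exact_mod_cast hp

lemma add_one_le_pow_rpow (hε : 0 < ε) {p : ℝ} (hp : (2 : ℝ) ^ (1 / ε) ≤ p) (k : ℕ) :
    (k : ℝ) + 1 ≤ (p ^ k) ^ ε := by
  have hp0 : 0 ≤ p := le_trans (by positivity) hp
  have htwo : (2 : ℝ) ≤ p ^ ε := by
    calc (2 : ℝ) = ((2 : ℝ) ^ (1 / ε)) ^ ε := by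
          rw [← Real.rpow_mul zero_le_two, one_div_mul_cancel hε.ne', Real.rpow_one]
      _ ≤ p ^ ε := by gcongr
  calc (k : ℝ) + 1 ≤ 2 ^ k := by exact_mod_cast Nat.lt_two_pow_self
    _ ≤ (p ^ ε) ^ k := by gcongr
    _ = (p ^ k) ^ ε := by
      rw [← Real.rpow_natCast, ← Real.rpow_natCast, ← Real.rpow_mul hp0, ← Real.rpow_mul hp0,
        mul_comm]

lemma rpow_eq_prod_primeFactors {n : ℕ} (hn : n ≠ 0) (ε : ℝ) :
    (n : ℝ) ^ ε = ∏ p ∈ n.primeFactors, ((p : ℝ) ^ n.factorization p) ^ ε := by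
  rw [Real.finsetProd_rpow _ _ fun p _ ↦ by positivity]
  congr 1
  exact_mod_cast (Nat.prod_factorization_pow_eq_self hn).symm

theorem exists_card_divisors_le_mul_rpow (hε : 0 < ε) :
    ∃ C : ℝ, 1 ≤ C ∧ ∀ n : ℕ, n ≠ 0 → (n.divisors.card : ℝ) ≤ C * (n : ℝ) ^ ε := by
  set K : ℝ := 1 + 1 / (ε * Real.log 2)
  have hK : 1 ≤ K := le_add_of_nonneg_right (by positivity)
  obtain ⟨P, hP⟩ := exists_nat_ge ((2 : ℝ) ^ (1 / ε))
  refine ⟨K ^ P, one_le_pow₀ hK, fun n hn ↦ ?_⟩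
  have hlocal : ∀ p ∈ n.primeFactors, (n.factorization p : ℝ) + 1 ≤
      (if p < P then K else 1) * ((p : ℝ) ^ n.factorization p) ^ ε := by
    intro p hp
    split_ifs with hpP
    · exact add_one_le_mul_pow_rpow hε (Nat.prime_of_mem_primeFactors hp).two_le _
    · rw [one_mul]
      exact add_one_le_pow_rpow hε (hP.trans (by exact_mod_cast not_lt.mp hpP)) _
  have hsmall : ∏ p ∈ n.primeFactors, (if p < P then K else 1) ≤ K ^ P := by
    rw [Finset.prod_ite, Finset.prod_const, Finset.prod_const_one, mul_one]
    refine pow_le_pow_right₀ hK ?_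
    calc (n.primeFactors.filter (· < P)).card ≤ (Finset.range P).card :=
          Finset.card_le_card fun p hp ↦ Finset.mem_range.mpr (Finset.mem_filter.mp hp).2
      _ = P := Finset.card_range P
  calc (n.divisors.card : ℝ) = ∏ p ∈ n.primeFactors, ((n.factorization p : ℝ) + 1) := by
        rw [Nat.card_divisors hn]; push_cast; rfl
    _ ≤ ∏ p ∈ n.primeFactors, (if p < P then K else 1) * ((p : ℝ) ^ n.factorization p) ^ ε :=
        Finset.prod_le_prod (fun p _ ↦ by positivity) hlocal
    _ = (∏ p ∈ n.primeFactors, (if p < P then K else 1)) * (n : ℝ) ^ ε := by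
        rw [Finset.prod_mul_distrib, rpow_eq_prod_primeFactors hn]
    _ ≤ K ^ P * (n : ℝ) ^ ε := by gcongr

end DivisorBound

/-! ### Elements of given norm in `ℤ√d` -/

section NormEquation

open Zsqrtd

variable {d M : ℤ}

lemma norm_mul_star_eq_sq {z w : ℤ√d} (hz : z.norm = M) (hw : w.norm = M) :
    (z * star w).re ^ 2 - d * (z * star w).im ^ 2 = M ^ 2 := by
  have h := norm_mul z (star w)
  rw [norm_conj, hz, hw, norm_def] at h
  linear_combination h

lemma mul_star_right_injective (hd : d < 0) {w : ℤ√d} (hw : w.norm ≠ 0) :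
    Function.Injective fun z : ℤ√d ↦ z * star w := by
  intro z z' h
  have hnorm : (z - z').norm * w.norm = 0 := by
    rw [← norm_conj w, ← norm_mul, sub_mul, sub_eq_zero.mpr h, norm_zero]
  exact sub_eq_zero.mp ((norm_eq_zero_iff hd _).mp ((mul_eq_zero.mp hnorm).resolve_right hw))

lemma abs_le_two_of_mul_im_eq (hM : 0 < M) {z w : ℤ√d} (hz : z.norm = M)
    (hw : w.norm = M) {e j : ℤ} (he : e ^ 2 ≤ -4 * d) (hj : e * (z * star w).im = M * j) :
    |j| ≤ 2 := by
  have him : -d * (z * star w).im ^ 2 ≤ M ^ 2 := by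
    linarith [norm_mul_star_eq_sq hz hw, sq_nonneg (z * star w).re]
  have hsq : M ^ 2 * j ^ 2 ≤ M ^ 2 * 2 ^ 2 := by
    calc M ^ 2 * j ^ 2 = e ^ 2 * (z * star w).im ^ 2 := by
          rw [← mul_pow, ← hj, mul_pow]
      _ ≤ -4 * d * (z * star w).im ^ 2 := by gcongr
      _ ≤ M ^ 2 * 2 ^ 2 := by linarith
  exact abs_le_of_sq_le_sq (le_of_mul_le_mul_left hsq (by positivity)) zero_le_two

lemma card_le_ten_of_dvd_mul_im (hd : d < 0) (hM : 0 < M) {w : ℤ√d} (hw : w.norm = M) {e : ℤ}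
    (he0 : e ≠ 0) (he : e ^ 2 ≤ -4 * d) (T : Finset (ℤ√d))
    (hT : ∀ z ∈ T, z.norm = M ∧ M ∣ e * (z * star w).im) : T.card ≤ 10 := by
  let f : ℤ√d → ℤ × Bool := fun z ↦ (e * (z * star w).im / M, decide (0 ≤ (z * star w).re))
  have hmaps : ∀ z ∈ T, f z ∈ Finset.Icc (-2 : ℤ) 2 ×ˢ (Finset.univ : Finset Bool) := by
    intro z hz
    obtain ⟨hzM, j, hj⟩ := hT z hz
    have hquot : (f z).1 = j := (congrArg (· / M) hj).trans (Int.mul_ediv_cancel_left j hM.ne')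
    refine Finset.mem_product.mpr ⟨Finset.mem_Icc.mpr ?_, Finset.mem_univ _⟩
    rw [hquot]
    exact abs_le.mp (abs_le_two_of_mul_im_eq hM hzM hw he hj)
  have hinj : Set.InjOn f T := by
    intro z hz z' hz' h
    obtain ⟨hzM, hzdvd⟩ := hT z hz
    obtain ⟨hzM', hzdvd'⟩ := hT z' hz'
    obtain ⟨hdiv, hsign⟩ := Prod.mk.inj h
    have him : (z * star w).im = (z' * star w).im :=
      mul_left_cancel₀ he0 ((Int.ediv_left_inj hzdvd hzdvd').mp hdiv)
    have hsq : (z * star w).re ^ 2 = (z' * star w).re ^ 2 := by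
      have hnorm := norm_mul_star_eq_sq hzM hw
      rw [him] at hnorm
      linarith [norm_mul_star_eq_sq hzM' hw]
    have hre : (z * star w).re = (z' * star w).re := by
      have hsign' := decide_eq_decide.mp hsign
      rcases sq_eq_sq_iff_eq_or_eq_neg.mp hsq with h | h <;> omega
    exact mul_star_right_injective hd (hw ▸ hM.ne') (Zsqrtd.ext hre him)
  calc T.card ≤ (Finset.Icc (-2 : ℤ) 2 ×ˢ (Finset.univ : Finset Bool)).card :=
        Finset.card_le_card_of_injOn f hmaps hinj
    _ = 10 := by simp

lemma dvd_im_mul_star_of_dvd_im_mul {z w t : ℤ√d} (ht : IsCoprime t.re t.im) {n : ℤ}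
    (hz : n ∣ (z * t).im) (hw : n ∣ (w * t).im) : n ∣ (z * star w).im := by
  obtain ⟨a, b, hab⟩ := ht
  have hcomb : (z * star w).im =
      (a * w.re - b * w.im) * (z * t).im + (b * z.im - a * z.re) * (w * t).im := by
    simp only [im_mul, re_star, im_star]
    linear_combination (z.re * w.im - z.im * w.re) * hab
  rw [hcomb]
  exact dvd_add (hz.mul_left _) (hw.mul_left _)

lemma sq_dvd_four_mul_of_dvd_im {z w : ℤ√d} (hz : z.norm = M) (hw : w.norm = M)
    (hzc : IsCoprime z.re z.im) (hwc : IsCoprime w.re w.im) {e : ℤ} (heM : e ^ 2 ∣ M)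
    (hsub : e ∣ (z * star w).im) (hadd : e ∣ (z * w).im) : e ^ 2 ∣ 4 * d := by
  have coprime_im : ∀ t : ℤ√d, t.norm = M → IsCoprime t.re t.im → IsCoprime e t.im := by
    intro t ht htc
    have hMt : IsCoprime (t.re ^ 2 + t.im * -(d * t.im)) t.im :=
      htc.pow_left.add_mul_left_left _
    refine hMt.of_isCoprime_of_dvd_left ((dvd_pow_self e two_ne_zero).trans (heM.trans ?_))
    rw [← ht, norm_def]
    exact dvd_of_eq (by ring)
  have hre : e ∣ 2 * w.re := by
    refine (coprime_im z hz hzc).dvd_of_dvd_mul_right ?_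
    have hsum : 2 * w.re * z.im = (z * star w).im + (z * w).im := by
      simp only [im_mul, re_star, im_star]; ring
    exact hsum ▸ dvd_add hsub hadd
  refine ((coprime_im w hw hwc).pow (m := 2) (n := 2)).dvd_of_dvd_mul_right ?_
  have hfour : 4 * d * w.im ^ 2 = (2 * w.re) ^ 2 - 4 * M := by
    rw [← hw, norm_def]; ring
  exact hfour ▸ dvd_sub (pow_dvd_pow_of_dvd hre 2) (heM.mul_left 4)

/-- By `Im (z * star w) * Im (z * w) = M * (z.im ^ 2 - w.im ^ 2)`, what `M` fails to share with the
first factor must divide the second. -/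
lemma dvd_im_mul_of_gcd_eq {z w : ℤ√d} (hz : z.norm = M) (hw : w.norm = M) {g : ℕ} {h : ℤ}
    (hM : M = g * h) (hM0 : M ≠ 0) (hg : Int.gcd (z * star w).im M = g) : h ∣ (z * w).im := by
  have hg0 : g ≠ 0 := by rintro rfl; simp_all
  obtain ⟨s, hs⟩ : (g : ℤ) ∣ (z * star w).im := hg ▸ Int.gcd_dvd_left _ _
  have hcop : IsCoprime h s := by
    rw [hs, hM, Int.gcd_mul_left, Int.natAbs_natCast] at hg
    exact (Int.isCoprime_iff_gcd_eq_one.mpr (Nat.eq_of_mul_eq_mul_left (Nat.pos_of_ne_zero hg0)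
      (hg.trans (mul_one g).symm))).symm
  refine hcop.dvd_of_dvd_mul_left
    ((mul_dvd_mul_iff_left (Int.natCast_ne_zero.mpr hg0)).mp ⟨z.im ^ 2 - w.im ^ 2, ?_⟩)
  have hprod : (z * star w).im * (z * w).im = M * (z.im ^ 2 - w.im ^ 2) := by
    rw [norm_def] at hz hw
    simp only [im_mul, re_star, im_star]
    linear_combination z.im ^ 2 * hw - w.im ^ 2 * hz
  rw [← mul_assoc, ← hs, hprod, hM]

lemma mul_dvd_gcd_mul {g h W : ℤ} (hg : g ∣ W) (hh : h ∣ W) : g * h ∣ Int.gcd g h * W := by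
  have hdvd : g * h ∣ (Int.gcd (g * W) (h * W) : ℤ) :=
    Int.dvd_coe_gcd (mul_dvd_mul_left g hh) (by rw [mul_comm g h]; exact mul_dvd_mul_left h hg)
  rw [Int.gcd_mul_right, Nat.cast_mul, Int.natCast_natAbs] at hdvd
  exact hdvd.trans (mul_dvd_mul_left _ (abs_dvd_self W))

lemma card_gcd_class_le_ten (hd : d < 0) (hM : 0 < M) {z₀ : ℤ√d} (hz₀ : z₀.norm = M)
    (hc₀ : IsCoprime z₀.re z₀.im) (g : ℕ) (T : Finset (ℤ√d))
    (hT : ∀ z ∈ T, z.norm = M ∧ IsCoprime z.re z.im ∧ Int.gcd (z * star z₀).im M = g) :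
    T.card ≤ 10 := by
  rcases T.eq_empty_or_nonempty with rfl | ⟨w, hwT⟩
  · simp
  obtain ⟨hw, hwc, hwg⟩ := hT w hwT
  obtain ⟨h, hMgh⟩ : (g : ℤ) ∣ M := hwg ▸ Int.gcd_dvd_right _ _
  have dvd_im : ∀ z ∈ T, (g : ℤ) ∣ (z * star z₀).im ∧ h ∣ (z * z₀).im := fun z hz ↦
    ⟨(hT z hz).2.2 ▸ Int.gcd_dvd_left _ _,
      dvd_im_mul_of_gcd_eq (hT z hz).1 hz₀ hMgh hM.ne' (hT z hz).2.2⟩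
  have heg : (Int.gcd g h : ℤ) ∣ g := Int.gcd_dvd_left _ _
  have heh : (Int.gcd g h : ℤ) ∣ h := Int.gcd_dvd_right _ _
  have hed : (Int.gcd g h : ℤ) ^ 2 ∣ 4 * d := by
    refine sq_dvd_four_mul_of_dvd_im hw hz₀ hwc hc₀ ?_ (heg.trans (dvd_im w hwT).1)
      (heh.trans (dvd_im w hwT).2)
    rw [hMgh, sq]
    exact mul_dvd_mul heg heh
  have he0 : (Int.gcd g h : ℤ) ≠ 0 := by
    intro h0
    rw [h0] at hed
    have := zero_dvd_iff.mp (by simpa using hed)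
    omega
  have he : (Int.gcd g h : ℤ) ^ 2 ≤ -4 * d :=
    Int.le_of_dvd (by omega) (by rw [neg_mul]; exact (dvd_neg).mpr hed)
  have hc₀' : IsCoprime (star z₀).re (star z₀).im := by simpa using hc₀.neg_right
  refine card_le_ten_of_dvd_mul_im hd hM hw he0 he T fun z hz ↦ ⟨(hT z hz).1, ?_⟩
  rw [hMgh]
  exact mul_dvd_gcd_mul
    (dvd_im_mul_star_of_dvd_im_mul hc₀' (dvd_im z hz).1 (dvd_im w hwT).1)
    (dvd_im_mul_star_of_dvd_im_mul hc₀ (dvd_im z hz).2 (dvd_im w hwT).2)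

lemma card_primitive_norm_eq_le (hd : d < 0) (hM : 0 < M) (T : Finset (ℤ√d))
    (hT : ∀ z ∈ T, z.norm = M ∧ IsCoprime z.re z.im) :
    T.card ≤ 10 * M.natAbs.divisors.card := by
  rcases T.eq_empty_or_nonempty with rfl | ⟨z₀, hz₀⟩
  · simp
  refine Finset.card_le_mul_card_image_of_maps_to
    (f := fun z ↦ Int.gcd (z * star z₀).im M) (fun z _ ↦ ?_) 10 fun g _ ↦ ?_
  · exact Nat.mem_divisors.mpr ⟨Int.gcd_dvd_natAbs_right _ _, by omega⟩
  · refine card_gcd_class_le_ten hd hM (hT z₀ hz₀).1 (hT z₀ hz₀).2 g _ fun z hz ↦ ?_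
    obtain ⟨hzT, hg⟩ := Finset.mem_filter.mp hz
    exact ⟨(hT z hzT).1, (hT z hzT).2, hg⟩

lemma card_norm_eq_of_gcd_le (hd : d < 0) (hM : 0 < M) {k : ℕ} (hk : k ≠ 0) (T : Finset (ℤ√d))
    (hT : ∀ z ∈ T, z.norm = M ∧ Int.gcd z.re z.im = k) :
    T.card ≤ 10 * M.natAbs.divisors.card := by
  have hprim : ∀ z ∈ T, ∃ b : ℤ√d, z = (k : ℤ) * b ∧ IsCoprime b.re b.im := by
    intro z hz
    obtain ⟨b, hb, hbc⟩ := exists_coprime_of_gcd_pos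
      ((hT z hz).2.symm ▸ Nat.pos_of_ne_zero hk : 0 < Int.gcd z.re z.im)
    exact ⟨b, (hT z hz).2 ▸ hb, hbc⟩
  choose! b hb hbc using hprim
  have hnorm : ∀ z ∈ T, (k : ℤ) ^ 2 * (b z).norm = M := fun z hz ↦ by
    rw [← (hT z hz).1, congrArg Zsqrtd.norm (hb z hz), norm_mul, norm_intCast]; ring
  rcases T.eq_empty_or_nonempty with rfl | ⟨z₀, hz₀⟩
  · simp
  have hk2 : (k : ℤ) ^ 2 ≠ 0 := pow_ne_zero 2 (Int.natCast_ne_zero.mpr hk)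
  have hM' : 0 < (b z₀).norm :=
    pos_of_mul_pos_right ((hnorm z₀ hz₀).symm ▸ hM : 0 < (k : ℤ) ^ 2 * _) (sq_nonneg _)
  have hinj : Set.InjOn b T := fun z hz z' hz' h ↦ by rw [hb z hz, hb z' hz', h]
  calc T.card = (T.image b).card := (Finset.card_image_of_injOn hinj).symm
    _ ≤ 10 * (b z₀).norm.natAbs.divisors.card := by
        refine card_primitive_norm_eq_le hd hM' _ (Finset.forall_mem_image.mpr fun z hz ↦ ?_)
        exact ⟨mul_left_cancel₀ hk2 ((hnorm z hz).trans (hnorm z₀ hz₀).symm), hbc z hz⟩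
    _ ≤ 10 * M.natAbs.divisors.card := by
        refine Nat.mul_le_mul_left 10 (Finset.card_le_card (Nat.divisors_subset_of_dvd
          (by omega) (Int.natAbs_dvd_natAbs.mpr ?_)))
        exact ⟨_, (hnorm z₀ hz₀).symm.trans (mul_comm _ _)⟩

theorem card_norm_eq_le (hd : d < 0) (hM : 0 < M) (T : Finset (ℤ√d))
    (hT : ∀ z ∈ T, z.norm = M) : T.card ≤ 10 * M.natAbs.divisors.card ^ 2 := by
  rw [sq, ← mul_assoc]
  refine Finset.card_le_mul_card_image_of_maps_to (f := fun z ↦ Int.gcd z.re z.im)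
    (fun z hz ↦ ?_) _ fun k hk ↦ ?_
  · refine Nat.mem_divisors.mpr ⟨Int.natCast_dvd.mp ?_, by omega⟩
    rw [← hT z hz, norm_def]
    exact dvd_sub ((Int.gcd_dvd_left _ _).mul_right _) ((Int.gcd_dvd_right _ _).mul_left _)
  · refine card_norm_eq_of_gcd_le hd hM (Nat.pos_of_mem_divisors hk).ne' _ fun z hz ↦ ?_
    exact ⟨hT z (Finset.mem_filter.mp hz).1, (Finset.mem_filter.mp hz).2⟩

theorem exists_card_norm_eq_le_mul_rpow {ε : ℝ} (hε : 0 < ε) :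
    ∃ C : ℝ, 0 < C ∧ ∀ {d M : ℤ} {L : ℝ}, d < 0 → 1 ≤ L → (M : ℝ) ≤ L →
      ∀ T : Finset (ℤ√d), (∀ z ∈ T, z.norm = M) → (T.card : ℝ) ≤ C * L ^ ε := by
  obtain ⟨C, hC, hdiv⟩ := exists_card_divisors_le_mul_rpow (half_pos hε)
  refine ⟨10 * C ^ 2, by positivity, fun {d M L} hd hL hML T hT ↦ ?_⟩
  rcases le_or_gt M 0 with hM | hM
  · have hsub : T ⊆ {0} := fun z hz ↦ Finset.mem_singleton.mpr <| (norm_eq_zero_iff hd z).mp <|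
      le_antisymm ((hT z hz).trans_le hM) (norm_nonneg hd.le z)
    calc (T.card : ℝ) ≤ 1 := by exact_mod_cast Finset.card_le_card hsub
      _ ≤ 10 * C ^ 2 * L ^ ε := one_le_mul_of_one_le_of_one_le
        (by nlinarith) (Real.one_le_rpow hL hε.le)
  · have hMcast : (M.natAbs : ℝ) = M := by
      rw [← Int.cast_natCast, Int.natAbs_of_nonneg hM.le]
    have hM' : (0 : ℝ) < M := by exact_mod_cast hM
    calc (T.card : ℝ) ≤ 10 * (M.natAbs.divisors.card : ℝ) ^ 2 := by
          exact_mod_cast card_norm_eq_le hd hM T hT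
      _ ≤ 10 * (C * (M : ℝ) ^ (ε / 2)) ^ 2 := by
          gcongr
          exact hMcast ▸ hdiv M.natAbs (by omega)
      _ = 10 * C ^ 2 * (M : ℝ) ^ ε := by
          rw [mul_pow, ← Real.rpow_mul_natCast hM'.le, Nat.cast_ofNat,
            div_mul_cancel₀ _ two_ne_zero, mul_assoc]
      _ ≤ 10 * C ^ 2 * L ^ ε := by gcongr

end NormEquation

/-! ### Hermite reduction -/

section IntegralEquivalence

open Matrix

variable {ι : Type*} [Fintype ι] [DecidableEq ι]

lemma isSymm_of_posDef {κ : Type*} {A : Matrix κ κ ℤ} (hA : A.PosDef) : A.IsSymm :=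
  (conjTranspose_eq_transpose_of_trivial A).symm.trans hA.isHermitian

lemma intCast_dotProduct_mulVec {κ : Type*} [Fintype κ] (A : Matrix κ κ ℤ) (x : κ → ℤ) :
    ((x ⬝ᵥ A *ᵥ x : ℤ) : ℝ) =
      (Int.cast ∘ x) ⬝ᵥ A.map (Int.cast : ℤ → ℝ) *ᵥ (Int.cast ∘ x) := by
  simp [dotProduct, mulVec]

lemma posDef_of_posDef_map_intCast {κ : Type*} [Finite κ] {A : Matrix κ κ ℤ}
    (hA : (A.map (Int.cast : ℤ → ℝ)).PosDef) : A.PosDef := by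
  have := Fintype.ofFinite κ
  refine .of_dotProduct_mulVec_pos (IsHermitian.ext fun i j ↦ ?_) fun x hx ↦ ?_
  · exact Int.cast_injective (α := ℝ) (hA.isHermitian.apply i j)
  · have hne : (Int.cast ∘ x : κ → ℝ) ≠ 0 := fun h ↦
      hx (funext fun i ↦ Int.cast_injective (α := ℝ) (by simpa using congrFun h i))
    have hpos := hA.dotProduct_mulVec_pos hne
    rw [star_trivial, ← intCast_dotProduct_mulVec] at hpos
    exact_mod_cast hpos

lemma intCast_det_pos {A : Matrix ι ι ℤ} (hA : (A.map (Int.cast : ℤ → ℝ)).PosDef) :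
    (0 : ℝ) < A.det :=
  hA.det_pos.trans_eq ((Int.castRingHom ℝ).map_det A).symm

/-- Equivalence over `ℤ` of integral Gram matrices: they express one quadratic form in two
`ℤ`-bases. -/
def IntegrallyEquivalent (A B : Matrix ι ι ℤ) : Prop :=
  ∃ U : Matrix ι ι ℤ, IsUnit U.det ∧ B = Uᵀ * A * U

namespace IntegrallyEquivalent

lemma refl (A : Matrix ι ι ℤ) : IntegrallyEquivalent A A :=
  ⟨1, by simp, by simp⟩

lemma trans {A B C : Matrix ι ι ℤ} (hAB : IntegrallyEquivalent A B)
    (hBC : IntegrallyEquivalent B C) : IntegrallyEquivalent A C := by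
  obtain ⟨U, hU, rfl⟩ := hAB
  obtain ⟨V, hV, rfl⟩ := hBC
  exact ⟨U * V, by simpa using hU.mul hV, by simp only [transpose_mul, Matrix.mul_assoc]⟩

lemma det_eq {A B : Matrix ι ι ℤ} (h : IntegrallyEquivalent A B) : B.det = A.det := by
  obtain ⟨U, hU, rfl⟩ := h
  rw [det_mul, det_mul, det_transpose, mul_right_comm, Int.isUnit_mul_self hU, one_mul]

lemma posDef {A B : Matrix ι ι ℤ} (h : IntegrallyEquivalent A B) (hA : A.PosDef) :
    B.PosDef := by
  obtain ⟨U, hU, rfl⟩ := h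
  exact conjTranspose_eq_transpose_of_trivial U ▸
    hA.conjTranspose_mul_mul_same (mulVec_injective_of_det_ne_zero hU.ne_zero)

lemma submatrix_swap (A : Matrix ι ι ℤ) (i j : ι) :
    IntegrallyEquivalent A (A.submatrix (Equiv.swap i j) (Equiv.swap i j)) := by
  refine ⟨swap ℤ i j, ?_, ?_⟩
  · rw [swap, det_permutation]
    exact (Equiv.Perm.sign (Equiv.swap i j)).isUnit
  · rw [transpose_swap, swap, Equiv.Perm.permMatrix, PEquiv.toMatrix_toPEquiv_mul,
      PEquiv.mul_toMatrix_toPEquiv]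
    simp [submatrix_submatrix]

lemma transvection {A : Matrix ι ι ℤ} {i j : ι} (hij : i ≠ j) (c : ℤ) :
    IntegrallyEquivalent A ((transvection i j c)ᵀ * A * transvection i j c) :=
  ⟨_, by simp [det_transvection_of_ne, hij], rfl⟩

end IntegrallyEquivalent

lemma exists_two_mul_abs_add_mul_le {a : ℤ} (ha : 0 < a) (b : ℤ) :
    ∃ c : ℤ, 2 * |b + c * a| ≤ a := by
  have hsub : ∀ k : ℤ, b + -k * a = b - a * k := fun k ↦ by ring
  have hdiv := Int.emod_add_mul_ediv b a
  have hlt := Int.emod_lt_of_pos b ha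
  have hnonneg := Int.emod_nonneg b ha.ne'
  rcases le_total (2 * (b % a)) a with h | h
  · refine ⟨-(b / a), ?_⟩
    rw [hsub, abs_of_nonneg] <;> omega
  · refine ⟨-(b / a + 1), ?_⟩
    rw [hsub, mul_add, mul_one, abs_of_nonpos] <;> omega

lemma transvection_conj_apply_same {A : Matrix ι ι ℤ} (hA : A.IsSymm) {i j : ι}
    (c : ℤ) : ((transvection i j c)ᵀ * A * transvection i j c) j j =
      A j j + 2 * c * A i j + c ^ 2 * A i i := by
  have htranspose : (transvection i j c)ᵀ = transvection j i c := by
    simp [transvection, transpose_single]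
  rw [mul_transvection_apply_same, htranspose, transvection_mul_apply_same,
    transvection_mul_apply_same, hA.apply i j]
  ring

lemma three_mul_sq_le_of_minimal {A : Matrix ι ι ℤ} (hA : A.PosDef) {i j : ι} (hij : i ≠ j)
    (hmin : ∀ B, IntegrallyEquivalent A B → A i i ≤ B j j) :
    3 * A i i ^ 2 ≤ 4 * (A i i * A j j - A i j ^ 2) := by
  have hii : 0 < A i i := hA.diag_pos
  obtain ⟨c, hc⟩ := exists_two_mul_abs_add_mul_le hii (A i j)
  have hle := hmin _ (.transvection hij c)
  rw [transvection_conj_apply_same (isSymm_of_posDef hA)] at hle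
  have hsq : (2 * (A i j + c * A i i)) ^ 2 ≤ A i i ^ 2 :=
    sq_le_sq' (by linarith [neg_abs_le (A i j + c * A i i)])
      (by linarith [le_abs_self (A i j + c * A i i)])
  linear_combination hsq + 4 * A i i * hle

lemma exists_integrallyEquivalent_minimal {n : ℕ} {A : Matrix (Fin (n + 1)) (Fin (n + 1)) ℤ}
    (hA : A.PosDef) : ∃ B, IntegrallyEquivalent A B ∧
      ∀ B', IntegrallyEquivalent A B' → ∀ k, B 0 0 ≤ B' k k := by
  let p : ℕ → Prop := fun m ↦ ∃ B, IntegrallyEquivalent A B ∧ ∃ k, B k k = m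
  have hp : ∃ m, p m := ⟨_, A, .refl A, 0, (Int.toNat_of_nonneg hA.diag_pos.le).symm⟩
  classical
  obtain ⟨B, hB, k, hk⟩ := Nat.find_spec hp
  refine ⟨_, hB.trans (.submatrix_swap B 0 k), fun B' hB' j ↦ ?_⟩
  have hjj : 0 ≤ B' j j := (hB'.posDef hA).diag_pos.le
  have hle := Nat.find_min' hp ⟨B', hB', j, (Int.toNat_of_nonneg hjj).symm⟩
  rw [submatrix_apply, Equiv.swap_apply_left, hk]
  omega

end IntegralEquivalence

section SchurComplement

open Matrix

variable {n : ℕ} {B : Matrix (Fin (n + 1)) (Fin (n + 1)) ℤ}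

/-- The Schur complement of the corner entry of an integral matrix, multiplied by that entry so as
to stay integral. -/
def schurComplement (B : Matrix (Fin (n + 1)) (Fin (n + 1)) ℤ) : Matrix (Fin n) (Fin n) ℤ :=
  B 0 0 • B.submatrix Fin.succ Fin.succ - vecMulVec (fun i ↦ B i.succ 0) (fun j ↦ B 0 j.succ)

lemma schurComplement_apply (B : Matrix (Fin (n + 1)) (Fin (n + 1)) ℤ) (i j : Fin n) :
    schurComplement B i j = B 0 0 * B i.succ j.succ - B i.succ 0 * B 0 j.succ :=
  rfl

lemma mulVec_vecCons_eq_schurComplement_mulVec (B : Matrix (Fin (n + 1)) (Fin (n + 1)) ℤ)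
    (y : Fin n → ℤ) :
    B *ᵥ vecCons (-((fun j ↦ B 0 j.succ) ⬝ᵥ y)) (B 0 0 • y) =
      vecCons 0 (schurComplement B *ᵥ y) := by
  ext i
  refine Fin.cases ?_ (fun i ↦ ?_) i
  · simp [mulVec, dotProduct, Fin.sum_univ_succ, Finset.mul_sum, mul_left_comm]
  · simp [mulVec, dotProduct, Fin.sum_univ_succ, schurComplement_apply, sub_mul, Finset.mul_sum,
      mul_assoc, mul_left_comm, neg_add_eq_sub]

lemma posDef_schurComplement (hB : B.PosDef) : (schurComplement B).PosDef := by
  have hsymm := isSymm_of_posDef hB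
  have hcorner : 0 < B 0 0 := hB.diag_pos
  refine .of_dotProduct_mulVec_pos ?_ fun y hy ↦ ?_
  · ext i j
    simp [schurComplement_apply, hsymm.apply, mul_comm]
  · have hx : vecCons (-((fun j ↦ B 0 j.succ) ⬝ᵥ y)) (B 0 0 • y) ≠ 0 := by
      intro h
      exact hy ((smul_eq_zero.mp (congrArg vecTail h)).resolve_left hcorner.ne')
    have hpos := hB.dotProduct_mulVec_pos hx
    rw [mulVec_vecCons_eq_schurComplement_mulVec] at hpos
    simpa only [star_trivial, cons_dotProduct_cons, mul_zero, zero_add, smul_dotProduct,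
      smul_eq_mul, mul_pos_iff_of_pos_left hcorner] using hpos

/-- The block matrix `diag(1, V)`. -/
def oneBlock (V : Matrix (Fin n) (Fin n) ℤ) : Matrix (Fin (n + 1)) (Fin (n + 1)) ℤ :=
  of (vecCons (Pi.single 0 1) fun i ↦ vecCons 0 (V i))

lemma det_oneBlock (V : Matrix (Fin n) (Fin n) ℤ) : (oneBlock V).det = V.det := by
  have hminor : (oneBlock V).submatrix Fin.succ (Fin.succAbove 0) = V := rfl
  rw [det_succ_row_zero, Fin.sum_univ_succ, hminor]
  simp [oneBlock]

lemma oneBlock_conj_apply_zero_zero (V : Matrix (Fin n) (Fin n) ℤ) :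
    ((oneBlock V)ᵀ * B * oneBlock V) 0 0 = B 0 0 := by
  simp [oneBlock, mul_apply, Fin.sum_univ_succ]

lemma schurComplement_oneBlock_conj (V : Matrix (Fin n) (Fin n) ℤ) :
    schurComplement ((oneBlock V)ᵀ * B * oneBlock V) = Vᵀ * schurComplement B * V := by
  have hrow : (fun j : Fin n ↦ ((oneBlock V)ᵀ * B * oneBlock V) 0 j.succ) =
      (fun j ↦ B 0 j.succ) ᵥ* V := by
    ext j
    simp [oneBlock, mul_apply, vecMul, dotProduct, Fin.sum_univ_succ]
  have hcol : (fun i : Fin n ↦ ((oneBlock V)ᵀ * B * oneBlock V) i.succ 0) =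
      Vᵀ *ᵥ fun i ↦ B i.succ 0 := by
    ext j
    simp [oneBlock, mul_apply, mulVec, dotProduct, Fin.sum_univ_succ]
  have hsub : ((oneBlock V)ᵀ * B * oneBlock V).submatrix Fin.succ Fin.succ =
      Vᵀ * B.submatrix Fin.succ Fin.succ * V := by
    ext i j
    simp [oneBlock, mul_apply, Fin.sum_univ_succ]
  rw [schurComplement, hrow, hcol, hsub, oneBlock_conj_apply_zero_zero, schurComplement,
    Matrix.mul_sub, Matrix.sub_mul, mul_vecMulVec, vecMulVec_mul, Matrix.mul_smul,
    Matrix.smul_mul]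

lemma exists_schurComplement_eq_of_integrallyEquivalent {C : Matrix (Fin n) (Fin n) ℤ}
    (h : IntegrallyEquivalent (schurComplement B) C) :
    ∃ B', IntegrallyEquivalent B B' ∧ B' 0 0 = B 0 0 ∧ schurComplement B' = C := by
  obtain ⟨V, hV, rfl⟩ := h
  exact ⟨_, ⟨oneBlock V, by rwa [det_oneBlock], rfl⟩, oneBlock_conj_apply_zero_zero V,
    schurComplement_oneBlock_conj V⟩

end SchurComplement

section JacobiDecomposition

open Matrix

/-- Completion of squares for the quadratic form of `B`: with `T` unit upper triangular and
`g` positive, `x ⬝ᵥ B *ᵥ x = ∑ i, g i * (T *ᵥ x) i ^ 2`. -/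
structure IsJacobiDecomposition {n : ℕ} (B : Matrix (Fin n) (Fin n) ℤ) (g : Fin n → ℝ)
    (T : Matrix (Fin n) (Fin n) ℝ) : Prop where
  upper : T.IsUpperTriangular
  diag_eq_one : ∀ i, T i i = 1
  pos : ∀ i, 0 < g i
  map_eq : B.map (Int.cast : ℤ → ℝ) = Tᵀ * diagonal g * T

namespace IsJacobiDecomposition

variable {n : ℕ} {B : Matrix (Fin n) (Fin n) ℤ} {g : Fin n → ℝ} {T : Matrix (Fin n) (Fin n) ℝ}

lemma det_eq (h : IsJacobiDecomposition B g T) : (B.det : ℝ) = ∏ i, g i := by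
  have hT : T.det = 1 := by simp [det_of_isUpperTriangular h.upper, h.diag_eq_one]
  calc (B.det : ℝ) = (B.map (Int.cast : ℤ → ℝ)).det := (Int.castRingHom ℝ).map_det B
    _ = ∏ i, g i := by simp [h.map_eq, hT]

lemma apply_eq (h : IsJacobiDecomposition B g T) (i j : Fin n) :
    (B i j : ℝ) = ∑ k, g k * T k i * T k j := by
  have hij := congrFun₂ h.map_eq i j
  simpa [mul_apply, diagonal_apply, mul_comm (T _ i)] using hij

lemma dotProduct_mulVec_eq (h : IsJacobiDecomposition B g T) (x : Fin n → ℤ) :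
    ((x ⬝ᵥ B *ᵥ x : ℤ) : ℝ) = ∑ i, g i * (T *ᵥ (Int.cast ∘ x)) i ^ 2 := by
  rw [intCast_dotProduct_mulVec, h.map_eq, ← mulVec_mulVec, ← mulVec_mulVec, dotProduct_mulVec,
    vecMul_transpose]
  simp [dotProduct, mulVec_diagonal, sq, mul_left_comm]

lemma mulVec_apply_eq (h : IsJacobiDecomposition B g T) (x : Fin n → ℤ) (i : Fin n) :
    (((B *ᵥ x) i : ℤ) : ℝ) = ∑ k, g k * T k i * (T *ᵥ (Int.cast ∘ x)) k := by
  have hcast : (((B *ᵥ x) i : ℤ) : ℝ) = (B.map (Int.cast : ℤ → ℝ) *ᵥ (Int.cast ∘ x)) i := by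
    simp [dotProduct, mulVec]
  rw [hcast, h.map_eq, ← mulVec_mulVec, ← mulVec_mulVec]
  generalize T *ᵥ (Int.cast ∘ x) = w
  simp [mulVec, dotProduct, diagonal_apply, mul_comm (T _ i), mul_right_comm (g _)]

lemma sum_mul_apply_zero {n : ℕ} {B : Matrix (Fin (n + 1)) (Fin (n + 1)) ℤ}
    {g : Fin (n + 1) → ℝ} {T : Matrix (Fin (n + 1)) (Fin (n + 1)) ℝ}
    (h : IsJacobiDecomposition B g T) (w : Fin (n + 1) → ℝ) :
    ∑ k, g k * T k 0 * w k = g 0 * w 0 := by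
  have hcol : ∀ k : Fin n, T k.succ 0 = 0 := fun k ↦ h.upper k.succ_pos
  simp [Fin.sum_univ_succ, hcol, h.diag_eq_one]

lemma apply_zero_zero {n : ℕ} {B : Matrix (Fin (n + 1)) (Fin (n + 1)) ℤ} {g : Fin (n + 1) → ℝ}
    {T : Matrix (Fin (n + 1)) (Fin (n + 1)) ℝ} (h : IsJacobiDecomposition B g T) :
    (B 0 0 : ℝ) = g 0 := by
  rw [h.apply_eq, h.sum_mul_apply_zero, h.diag_eq_one, mul_one]

section Plane

variable {n : ℕ} {B : Matrix (Fin (n + 2)) (Fin (n + 2)) ℤ} {g : Fin (n + 2) → ℝ}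
  {T : Matrix (Fin (n + 2)) (Fin (n + 2)) ℝ}

lemma sum_mul_apply_one (h : IsJacobiDecomposition B g T) (w : Fin (n + 2) → ℝ) :
    ∑ k, g k * T k 1 * w k = g 0 * T 0 1 * w 0 + g 1 * w 1 := by
  have hcol : ∀ k : Fin n, T k.succ.succ 1 = 0 := fun k ↦
    h.upper (Fin.succ_lt_succ_iff.mpr k.succ_pos)
  simp [Fin.sum_univ_succ, hcol, h.diag_eq_one]

lemma apply_one_zero (h : IsJacobiDecomposition B g T) : (B 1 0 : ℝ) = g 0 * T 0 1 := by
  have hzero : T 1 0 = 0 := h.upper Fin.zero_lt_one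
  rw [h.apply_eq, h.sum_mul_apply_one, h.diag_eq_one, hzero, mul_one, mul_zero, add_zero]

lemma schurComplement_zero_zero (h : IsJacobiDecomposition B g T) :
    (schurComplement B 0 0 : ℝ) = g 0 * g 1 := by
  have h01 : (B 0 1 : ℝ) = g 0 * T 0 1 := by rw [h.apply_eq, h.sum_mul_apply_zero]
  have h11 : (B 1 1 : ℝ) = g 0 * T 0 1 * T 0 1 + g 1 := by
    rw [h.apply_eq, h.sum_mul_apply_one, h.diag_eq_one, mul_one]
  rw [schurComplement_apply, Fin.succ_zero_eq_one, Int.cast_sub, Int.cast_mul, Int.cast_mul,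
    h.apply_zero_zero, h.apply_one_zero, h01, h11]
  ring

lemma schurComplement_zero_zero_pos (h : IsJacobiDecomposition B g T) :
    0 < schurComplement B 0 0 := by
  have hpos := mul_pos (h.pos 0) (h.pos 1)
  rw [← h.schurComplement_zero_zero] at hpos
  exact_mod_cast hpos

end Plane

end IsJacobiDecomposition

lemma isJacobiDecomposition_of_schurComplement {n : ℕ}
    {B : Matrix (Fin (n + 1)) (Fin (n + 1)) ℤ} (hB : B.IsSymm) (hpos : 0 < B 0 0)
    {g : Fin n → ℝ} {T : Matrix (Fin n) (Fin n) ℝ}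
    (h : IsJacobiDecomposition (schurComplement B) g T) :
    IsJacobiDecomposition B (vecCons (B 0 0 : ℝ) fun i ↦ g i / B 0 0)
      (of (vecCons (vecCons 1 fun j ↦ (B 0 j.succ : ℝ) / B 0 0) fun i ↦ vecCons 0 (T i))) where
  upper := by
    intro i j hji
    induction i using Fin.cases with
    | zero => exact absurd hji (Fin.not_lt_zero j)
    | succ i =>
      induction j using Fin.cases with
      | zero => rfl
      | succ j => exact h.upper (Fin.succ_lt_succ_iff.mp hji)
  diag_eq_one := Fin.cases rfl h.diag_eq_one
  pos := Fin.cases (Int.cast_pos.mpr hpos) fun i ↦ div_pos (h.pos i) (Int.cast_pos.mpr hpos)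
  map_eq := by
    have hne : (B 0 0 : ℝ) ≠ 0 := Int.cast_ne_zero.mpr hpos.ne'
    ext i j
    induction i using Fin.cases with
    | zero =>
      induction j using Fin.cases with
      | zero => simp [mul_apply, diagonal_apply, Fin.sum_univ_succ]
      | succ j => simp [mul_apply, diagonal_apply, Fin.sum_univ_succ, mul_div_cancel₀ _ hne]
    | succ i =>
      induction j using Fin.cases with
      | zero => simp [mul_apply, diagonal_apply, Fin.sum_univ_succ, hne, hB.apply]
      | succ j =>
        have hC := h.apply_eq i j
        rw [schurComplement_apply, hB.apply 0 i.succ] at hC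
        have hcomplete : (B i.succ j.succ : ℝ) = B 0 i.succ * (B 0 j.succ / B 0 0) +
            (∑ k, g k * T k i * T k j) / B 0 0 := by
          rw [← hC]
          push_cast
          field_simp
          ring
        simp [hcomplete, Finset.sum_div, mul_apply, diagonal_apply, Fin.sum_univ_succ,
          mul_div_right_comm, mul_comm (T _ i), hne]

lemma three_quarters_mul_le_div_of_minimal {n : ℕ} {B : Matrix (Fin (n + 2)) (Fin (n + 2)) ℤ}
    (hB : B.PosDef) {g : Fin (n + 1) → ℝ} {T : Matrix (Fin (n + 1)) (Fin (n + 1)) ℝ}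
    (hJ : IsJacobiDecomposition (schurComplement B) g T)
    (hmin : ∀ B', IntegrallyEquivalent B B' → B 0 0 ≤ B' 1 1) :
    3 / 4 * (B 0 0 : ℝ) ≤ g 0 / B 0 0 := by
  have hlagrange : 3 * (B 0 0 : ℝ) ^ 2 ≤ 4 * (B 0 0 * B 1 1 - B 0 1 ^ 2) := by
    exact_mod_cast three_mul_sq_le_of_minimal hB zero_ne_one hmin
  have hg : g 0 = B 0 0 * B 1 1 - B 0 1 ^ 2 := by
    rw [← hJ.apply_zero_zero, schurComplement_apply, (isSymm_of_posDef hB).apply 0 (Fin.succ 0),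
      ← sq]
    exact_mod_cast rfl
  rw [le_div_iff₀ (Int.cast_pos.mpr hB.diag_pos), hg]
  linarith

/-- Hermite's inequalities between consecutive coefficients of a completion of squares. -/
def IsHermiteReduced {n : ℕ} (g : Fin n → ℝ) : Prop :=
  ∀ i j : Fin n, (i : ℕ) + 1 = j → 3 / 4 * g i ≤ g j

theorem exists_reduced_jacobiDecomposition {n : ℕ} {A : Matrix (Fin n) (Fin n) ℤ}
    (hA : A.PosDef) : ∃ B g T, IntegrallyEquivalent A B ∧ IsJacobiDecomposition B g T ∧
      IsHermiteReduced g := by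
  induction n with
  | zero => exact ⟨A, 0, 0, .refl A, ⟨nofun, nofun, nofun, Subsingleton.elim _ _⟩, nofun⟩
  | succ n ih =>
    obtain ⟨B, hAB, hmin⟩ := exists_integrallyEquivalent_minimal hA
    obtain ⟨C, g, T, hBC, hJ, hred⟩ := ih (posDef_schurComplement (hAB.posDef hA))
    obtain ⟨B', hBB', hcorner, rfl⟩ := exists_schurComplement_eq_of_integrallyEquivalent hBC
    have hB' : B'.PosDef := hBB'.posDef (hAB.posDef hA)
    have hpos : (0 : ℝ) < B' 0 0 := Int.cast_pos.mpr hB'.diag_pos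
    refine ⟨B', _, _, hAB.trans hBB', isJacobiDecomposition_of_schurComplement
      (isSymm_of_posDef hB') hB'.diag_pos hJ, fun i j hij ↦ ?_⟩
    induction j using Fin.cases with
    | zero => exact absurd hij (Nat.succ_ne_zero _)
    | succ j =>
      induction i using Fin.cases with
      | zero =>
        cases n with
        | zero => exact j.elim0
        | succ n =>
          obtain rfl : j = 0 := by ext; simpa using hij.symm
          exact three_quarters_mul_le_div_of_minimal hB' hJ fun B'' h ↦
            hcorner ▸ hmin B'' (hAB.trans (hBB'.trans h)) 1
      | succ i =>
        change 3 / 4 * (g i / B' 0 0) ≤ g j / B' 0 0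
        rw [← mul_div_assoc]
        exact div_le_div_of_nonneg_right (hred i j (by simpa using hij)) hpos.le

end JacobiDecomposition

/-! ### Lattice points of ellipsoids and quadrics -/

section Counting

open Matrix

lemma card_le_mul_card_image_of_fiber_le {α β : Type*} [DecidableEq β] {F : Finset α} {f : α → β}
    {c : ℝ} (h : ∀ b ∈ F.image f, ((F.filter (f · = b)).card : ℝ) ≤ c) :
    (F.card : ℝ) ≤ c * (F.image f).card := by
  rw [Finset.card_eq_sum_card_image f F, Nat.cast_sum, mul_comm, ← nsmul_eq_mul]
  exact Finset.sum_le_card_nsmul _ _ _ h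

lemma card_le_of_abs_add_le {c R : ℝ} (hR : 0 ≤ R) {F : Finset ℤ}
    (hF : ∀ t ∈ F, |(t : ℝ) + c| ≤ R) : (F.card : ℝ) ≤ 2 * R + 1 := by
  have hsub : F ⊆ Finset.Icc ⌈-R - c⌉ ⌊R - c⌋ := fun t ht ↦ by
    have habs := abs_le.mp (hF t ht)
    exact Finset.mem_Icc.mpr ⟨Int.ceil_le.mpr (by linarith), Int.le_floor.mpr (by linarith)⟩
  have hcard : (F.card : ℤ) ≤ max (⌊R - c⌋ + 1 - ⌈-R - c⌉) 0 := by
    rw [← Int.toNat_eq_max, ← Int.card_Icc]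
    exact_mod_cast Finset.card_le_card hsub
  calc (F.card : ℝ) ≤ max ((⌊R - c⌋ : ℝ) + 1 - ⌈-R - c⌉) 0 := by exact_mod_cast hcard
    _ ≤ 2 * R + 1 := max_le (by linarith [Int.floor_le (R - c), Int.le_ceil (-R - c)])
      (by linarith)

section UnitUpperTriangular

variable {n : ℕ} {T : Matrix (Fin (n + 1)) (Fin (n + 1)) ℝ}

lemma mulVec_succ_of_upperTriangular (hT : T.IsUpperTriangular) (x : Fin (n + 1) → ℤ) (i : Fin n) :
    (T *ᵥ (Int.cast ∘ x)) i.succ =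
      (T.submatrix Fin.succ Fin.succ *ᵥ (Int.cast ∘ Fin.tail x)) i := by
  have hcol : T i.succ 0 = 0 := hT i.succ_pos
  simp [mulVec, dotProduct, Fin.sum_univ_succ, hcol, Fin.tail]

lemma mulVec_zero_eq_add_tail (hT : T 0 0 = 1) (x : Fin (n + 1) → ℤ) :
    (T *ᵥ (Int.cast ∘ x)) 0 = x 0 + ∑ j : Fin n, T 0 j.succ * Fin.tail x j := by
  simp [mulVec, dotProduct, Fin.sum_univ_succ, hT, Fin.tail]

lemma eq_of_mulVec_zero_eq_of_tail_eq (hT : T 0 0 = 1) {x x' : Fin (n + 1) → ℤ}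
    (htail : Fin.tail x = Fin.tail x')
    (hzero : (T *ᵥ (Int.cast ∘ x)) 0 = (T *ᵥ (Int.cast ∘ x')) 0) : x = x' := by
  rw [mulVec_zero_eq_add_tail hT, mulVec_zero_eq_add_tail hT, htail] at hzero
  rw [← Fin.cons_self_tail x, ← Fin.cons_self_tail x', htail,
    Int.cast_injective (add_right_cancel hzero)]

end UnitUpperTriangular

lemma card_le_prod_of_abs_mulVec_le {n : ℕ} {T : Matrix (Fin n) (Fin n) ℝ}
    (hT : T.IsUpperTriangular) (hdiag : ∀ i, T i i = 1) {R : Fin n → ℝ} (hR : ∀ i, 0 ≤ R i)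
    {F : Finset (Fin n → ℤ)} (hF : ∀ x ∈ F, ∀ i, |(T *ᵥ (Int.cast ∘ x)) i| ≤ R i) :
    (F.card : ℝ) ≤ ∏ i, (2 * R i + 1) := by
  induction n with
  | zero => simpa using Finset.card_le_one_of_subsingleton F
  | succ n ih =>
    have hfiber : ∀ y ∈ F.image Fin.tail,
        ((F.filter (Fin.tail · = y)).card : ℝ) ≤ 2 * R 0 + 1 := by
      intro y _
      have hinj : Set.InjOn (fun x : Fin (n + 1) → ℤ ↦ x 0) (F.filter (Fin.tail · = y)) := by
        intro x hx x' hx' h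
        rw [← Fin.cons_self_tail x, ← Fin.cons_self_tail x', (Finset.mem_filter.mp hx).2,
          (Finset.mem_filter.mp hx').2, show x 0 = x' 0 from h]
      rw [← Finset.card_image_of_injOn hinj]
      refine card_le_of_abs_add_le (c := ∑ j : Fin n, T 0 j.succ * y j) (hR 0)
        (Finset.forall_mem_image.mpr fun x hx ↦ ?_)
      obtain ⟨hxF, rfl⟩ := Finset.mem_filter.mp hx
      exact mulVec_zero_eq_add_tail (hdiag 0) x ▸ hF x hxF 0
    have himage : ((F.image Fin.tail).card : ℝ) ≤ ∏ i : Fin n, (2 * R i.succ + 1) := by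
      refine ih (T := T.submatrix Fin.succ Fin.succ)
        (fun i j hij ↦ hT (Fin.succ_lt_succ_iff.mpr hij)) (fun i ↦ hdiag i.succ)
        (fun i ↦ hR i.succ) (Finset.forall_mem_image.mpr fun x hx i ↦ ?_)
      exact mulVec_succ_of_upperTriangular hT x i ▸ hF x hx i.succ
    calc (F.card : ℝ) ≤ (2 * R 0 + 1) * (F.image Fin.tail).card :=
          card_le_mul_card_image_of_fiber_le hfiber
      _ ≤ (2 * R 0 + 1) * ∏ i : Fin n, (2 * R i.succ + 1) :=
          mul_le_mul_of_nonneg_left himage (by linarith [hR 0])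
      _ = ∏ i, (2 * R i + 1) := (Fin.prod_univ_succ fun i ↦ 2 * R i + 1).symm

/-- The length of the range of one coordinate on `g * t ^ 2 ≤ N`, plus one: a bound for the number
of values such a coordinate takes on a translate of `ℤ`. -/
noncomputable def sideBound (N g : ℝ) : ℝ :=
  2 * √(N / g) + 1

lemma sideBound_nonneg (N g : ℝ) : 0 ≤ sideBound N g := by
  unfold sideBound
  positivity

/-- `(B₀₀ (Bx)₁ - B₁₀ (Bx)₀) + (Bx)₀ √(-Δ)`, with `Δ` the leading `2 × 2` minor of `B`: integral
coordinates in which the first two squares of the completed form are proportional to the norm. -/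
def planeCoord {n : ℕ} (B : Matrix (Fin (n + 2)) (Fin (n + 2)) ℤ) (x : Fin (n + 2) → ℤ) :
    ℤ√(-schurComplement B 0 0) :=
  ⟨B 0 0 * (B *ᵥ x) 1 - B 1 0 * (B *ᵥ x) 0, (B *ᵥ x) 0⟩

namespace IsJacobiDecomposition

section Ball

variable {n : ℕ} {B : Matrix (Fin n) (Fin n) ℤ} {g : Fin n → ℝ} {T : Matrix (Fin n) (Fin n) ℝ}
  {N : ℝ}

lemma abs_mulVec_le (h : IsJacobiDecomposition B g T) {x : Fin n → ℤ}
    (hx : ((x ⬝ᵥ B *ᵥ x : ℤ) : ℝ) ≤ N) (i : Fin n) :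
    |(T *ᵥ (Int.cast ∘ x)) i| ≤ √(N / g i) := by
  refine Real.abs_le_sqrt ((le_div_iff₀' (h.pos i)).mpr (le_trans ?_ hx))
  rw [h.dotProduct_mulVec_eq]
  exact Finset.single_le_sum (fun j _ ↦ mul_nonneg (h.pos j).le (sq_nonneg _)) (Finset.mem_univ i)

lemma card_le_prod_sideBound (h : IsJacobiDecomposition B g T) {F : Finset (Fin n → ℤ)}
    (hF : ∀ x ∈ F, ((x ⬝ᵥ B *ᵥ x : ℤ) : ℝ) ≤ N) : (F.card : ℝ) ≤ ∏ i, sideBound N (g i) :=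
  card_le_prod_of_abs_mulVec_le h.upper h.diag_eq_one (fun _ ↦ Real.sqrt_nonneg _)
    fun x hx ↦ h.abs_mulVec_le (hF x hx)

lemma finite_le (h : IsJacobiDecomposition B g T) (N : ℝ) :
    {x : Fin n → ℤ | ((x ⬝ᵥ B *ᵥ x : ℤ) : ℝ) ≤ N}.Finite := by
  by_contra hinf
  obtain ⟨k, hk⟩ := exists_nat_gt (∏ i, sideBound N (g i))
  obtain ⟨F, hF, rfl⟩ := Set.Infinite.exists_subset_card_eq hinf k
  exact (h.card_le_prod_sideBound fun x hx ↦ hF hx).not_gt hk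

end Ball

section Plane

variable {n : ℕ} {B : Matrix (Fin (n + 2)) (Fin (n + 2)) ℤ} {g : Fin (n + 2) → ℝ}
  {T : Matrix (Fin (n + 2)) (Fin (n + 2)) ℝ}

lemma planeCoord_im (h : IsJacobiDecomposition B g T) (x : Fin (n + 2) → ℤ) :
    ((planeCoord B x).im : ℝ) = g 0 * (T *ᵥ (Int.cast ∘ x)) 0 := by
  rw [planeCoord, h.mulVec_apply_eq, h.sum_mul_apply_zero]

lemma planeCoord_re (h : IsJacobiDecomposition B g T) (x : Fin (n + 2) → ℤ) :
    ((planeCoord B x).re : ℝ) = g 0 * g 1 * (T *ᵥ (Int.cast ∘ x)) 1 := by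
  rw [planeCoord, Int.cast_sub, Int.cast_mul, Int.cast_mul, h.mulVec_apply_eq, h.mulVec_apply_eq,
    h.sum_mul_apply_zero, h.sum_mul_apply_one, h.apply_zero_zero, h.apply_one_zero]
  ring

lemma norm_planeCoord (h : IsJacobiDecomposition B g T) (x : Fin (n + 2) → ℤ) :
    ((planeCoord B x).norm : ℝ) = g 0 ^ 2 * g 1 * (((x ⬝ᵥ B *ᵥ x : ℤ) : ℝ) -
      ∑ i : Fin n, g i.succ.succ * (T *ᵥ (Int.cast ∘ x)) i.succ.succ ^ 2) := by
  rw [Zsqrtd.norm_def]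
  push_cast
  rw [h.planeCoord_re, h.planeCoord_im, h.schurComplement_zero_zero, h.dotProduct_mulVec_eq,
    Fin.sum_univ_succ, Fin.sum_univ_succ, Fin.succ_zero_eq_one]
  ring

lemma norm_planeCoord_le (h : IsJacobiDecomposition B g T) (x : Fin (n + 2) → ℤ) :
    ((planeCoord B x).norm : ℝ) ≤ g 0 ^ 2 * g 1 * ((x ⬝ᵥ B *ᵥ x : ℤ) : ℝ) := by
  rw [h.norm_planeCoord]
  refine mul_le_mul_of_nonneg_left (sub_le_self _ (Finset.sum_nonneg fun i _ ↦ ?_))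
    (mul_pos (pow_pos (h.pos 0) 2) (h.pos 1)).le
  exact mul_nonneg (h.pos _).le (sq_nonneg _)

lemma mulVec_succ_succ (h : IsJacobiDecomposition B g T) (x : Fin (n + 2) → ℤ) (i : Fin n) :
    (T *ᵥ (Int.cast ∘ x)) i.succ.succ =
      (T.submatrix (Fin.succ ∘ Fin.succ) (Fin.succ ∘ Fin.succ) *ᵥ
        (Int.cast ∘ Fin.tail (Fin.tail x))) i := by
  have hupper : (T.submatrix Fin.succ Fin.succ).IsUpperTriangular :=
    fun i j hij ↦ h.upper (Fin.succ_lt_succ_iff.mpr hij)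
  rw [mulVec_succ_of_upperTriangular h.upper, mulVec_succ_of_upperTriangular hupper,
    submatrix_submatrix]

lemma planeCoord_injOn (h : IsJacobiDecomposition B g T) (y : Fin n → ℤ) :
    Set.InjOn (planeCoord B) {x | Fin.tail (Fin.tail x) = y} := by
  intro x hx x' hx' heq
  have hzero : (T *ᵥ (Int.cast ∘ x)) 0 = (T *ᵥ (Int.cast ∘ x')) 0 := by
    refine mul_left_cancel₀ (h.pos 0).ne' ?_
    rw [← h.planeCoord_im, ← h.planeCoord_im, heq]
  have hone : (T *ᵥ (Int.cast ∘ x)) 1 = (T *ᵥ (Int.cast ∘ x')) 1 := by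
    refine mul_left_cancel₀ (mul_pos (h.pos 0) (h.pos 1)).ne' ?_
    rw [← h.planeCoord_re, ← h.planeCoord_re, heq]
  refine eq_of_mulVec_zero_eq_of_tail_eq (h.diag_eq_one 0) ?_ hzero
  refine eq_of_mulVec_zero_eq_of_tail_eq (T := T.submatrix Fin.succ Fin.succ) (h.diag_eq_one 1)
    (hx.trans hx'.symm) ?_
  have hsucc := mulVec_succ_of_upperTriangular h.upper
  exact (hsucc x 0).symm.trans (hone.trans (hsucc x' 0))

variable {K N : ℝ} {m : ℤ} {F : Finset (Fin (n + 2) → ℤ)}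

lemma card_filter_tail_tail_eq_le (h : IsJacobiDecomposition B g T)
    (hK : ∀ M : ℤ, (M : ℝ) ≤ g 0 ^ 2 * g 1 * m → ∀ S : Finset (ℤ√(-schurComplement B 0 0)),
      (∀ z ∈ S, z.norm = M) → (S.card : ℝ) ≤ K)
    (hF : ∀ x ∈ F, x ⬝ᵥ B *ᵥ x = m) {x₀ : Fin (n + 2) → ℤ} (hx₀ : x₀ ∈ F) :
    ((F.filter fun x ↦ Fin.tail (Fin.tail x) = Fin.tail (Fin.tail x₀)).card : ℝ) ≤ K := by
  have hinj : Set.InjOn (planeCoord B)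
      (F.filter fun x ↦ Fin.tail (Fin.tail x) = Fin.tail (Fin.tail x₀)) :=
    (h.planeCoord_injOn _).mono fun x hx ↦ (Finset.mem_filter.mp hx).2
  rw [← Finset.card_image_of_injOn hinj]
  refine hK (planeCoord B x₀).norm (hF x₀ hx₀ ▸ h.norm_planeCoord_le x₀) _
    (Finset.forall_mem_image.mpr fun x hx ↦ ?_)
  obtain ⟨hxF, htail⟩ := Finset.mem_filter.mp hx
  refine Int.cast_injective (α := ℝ) ?_
  simp only [h.norm_planeCoord, hF x hxF, hF x₀ hx₀, h.mulVec_succ_succ, htail]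

lemma card_image_tail_tail_le (h : IsJacobiDecomposition B g T)
    (hF : ∀ x ∈ F, ((x ⬝ᵥ B *ᵥ x : ℤ) : ℝ) ≤ N) :
    ((F.image fun x ↦ Fin.tail (Fin.tail x)).card : ℝ) ≤
      ∏ i : Fin n, sideBound N (g i.succ.succ) := by
  refine card_le_prod_of_abs_mulVec_le
    (T := T.submatrix (Fin.succ ∘ Fin.succ) (Fin.succ ∘ Fin.succ)) (fun i j hij ↦ ?_)
    (fun i ↦ h.diag_eq_one _) (fun _ ↦ Real.sqrt_nonneg _)
    (Finset.forall_mem_image.mpr fun x hx i ↦ ?_)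
  · exact h.upper (Fin.succ_lt_succ_iff.mpr (Fin.succ_lt_succ_iff.mpr hij))
  · exact h.mulVec_succ_succ x i ▸ h.abs_mulVec_le (hF x hx) i.succ.succ

lemma card_le_mul_prod_sideBound (h : IsJacobiDecomposition B g T)
    (hK : ∀ M : ℤ, (M : ℝ) ≤ g 0 ^ 2 * g 1 * N → ∀ S : Finset (ℤ√(-schurComplement B 0 0)),
      (∀ z ∈ S, z.norm = M) → (S.card : ℝ) ≤ K)
    (hm : (m : ℝ) ≤ N) (hF : ∀ x ∈ F, x ⬝ᵥ B *ᵥ x = m) :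
    (F.card : ℝ) ≤ K * ∏ i : Fin n, sideBound N (g i.succ.succ) := by
  have hK_nonneg : 0 ≤ K :=
    (Nat.cast_nonneg _).trans (hK _ (Int.floor_le _) ∅ fun _ hz ↦ absurd hz (Finset.notMem_empty _))
  have hscale : g 0 ^ 2 * g 1 * m ≤ g 0 ^ 2 * g 1 * N :=
    mul_le_mul_of_nonneg_left hm (mul_pos (pow_pos (h.pos 0) 2) (h.pos 1)).le
  have hfiber : ∀ y ∈ F.image fun x ↦ Fin.tail (Fin.tail x),
      ((F.filter fun x ↦ Fin.tail (Fin.tail x) = y).card : ℝ) ≤ K :=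
    Finset.forall_mem_image.mpr fun x₀ hx₀ ↦
      h.card_filter_tail_tail_eq_le (fun M hM ↦ hK M (hM.trans hscale)) hF hx₀
  calc (F.card : ℝ) ≤ K * (F.image fun x ↦ Fin.tail (Fin.tail x)).card :=
        card_le_mul_card_image_of_fiber_le hfiber
    _ ≤ K * ∏ i : Fin n, sideBound N (g i.succ.succ) :=
        mul_le_mul_of_nonneg_left
          (h.card_image_tail_tail_le fun x hx ↦ (hF x hx).symm ▸ hm) hK_nonneg

end Plane

end IsJacobiDecomposition

end Counting

section ValueCount

open Matrix

/-- The number of integral vectors at which the quadratic form `x ⬝ᵥ A *ᵥ x` takes the value `m`;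
zero, by the convention for infinite sets, when there are infinitely many. -/
noncomputable def valueCount {ι : Type*} [Fintype ι] (A : Matrix ι ι ℤ) (m : ℤ) : ℕ :=
  {x : ι → ℤ | x ⬝ᵥ A *ᵥ x = m}.ncard

lemma IntegrallyEquivalent.valueCount_eq {ι : Type*} [Fintype ι] [DecidableEq ι]
    {A B : Matrix ι ι ℤ} (h : IntegrallyEquivalent A B) (m : ℤ) :
    valueCount A m = valueCount B m := by
  obtain ⟨U, hU, rfl⟩ := h
  have hinj : Function.Injective U.mulVec := mulVec_injective_of_det_ne_zero hU.ne_zero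
  have hsurj : Function.Surjective U.mulVec :=
    mulVec_surjective_iff_isUnit.mpr ((isUnit_iff_isUnit_det U).mpr hU)
  have hpre : {x | x ⬝ᵥ (Uᵀ * A * U) *ᵥ x = m} = U.mulVec ⁻¹' {x | x ⬝ᵥ A *ᵥ x = m} := by
    ext x
    simp only [Set.mem_ofPred_eq, Set.mem_preimage, ← mulVec_mulVec, dotProduct_mulVec x Uᵀ,
      vecMul_transpose]
  rw [valueCount, valueCount, hpre,
    Set.ncard_preimage_of_injective_subset_range hinj (hsurj.range_eq ▸ Set.subset_univ _)]

namespace IsJacobiDecomposition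

lemma valueCount_eq_card {n : ℕ} {B : Matrix (Fin n) (Fin n) ℤ} {g : Fin n → ℝ}
    {T : Matrix (Fin n) (Fin n) ℝ} (h : IsJacobiDecomposition B g T) {N : ℝ} {m : ℤ}
    (hm : (m : ℝ) ≤ N) :
    valueCount B m = ((h.finite_le N).toFinset.filter fun x ↦ x ⬝ᵥ B *ᵥ x = m).card := by
  rw [valueCount, ← Set.ncard_coe_finset]
  congr 1
  ext x
  simpa using fun hx : x ⬝ᵥ B *ᵥ x = m ↦ hx ▸ hm

lemma sum_valueCount_le {n : ℕ} {B : Matrix (Fin n) (Fin n) ℤ} {g : Fin n → ℝ}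
    {T : Matrix (Fin n) (Fin n) ℝ} (h : IsJacobiDecomposition B g T) {N : ℝ} {s : Finset ℤ}
    (hs : ∀ m ∈ s, (m : ℝ) ≤ N) : ∑ m ∈ s, (valueCount B m : ℝ) ≤ ∏ i, sideBound N (g i) := by
  rw [Finset.sum_congr rfl fun m hm ↦ congrArg Nat.cast (h.valueCount_eq_card (hs m hm)),
    ← Nat.cast_sum, Finset.sum_card_fiberwise_eq_card_filter]
  exact h.card_le_prod_sideBound fun x hx ↦
    (h.finite_le N).mem_toFinset.mp (Finset.mem_filter.mp hx).1

variable {n : ℕ} {B : Matrix (Fin (n + 2)) (Fin (n + 2)) ℤ} {g : Fin (n + 2) → ℝ}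
  {T : Matrix (Fin (n + 2)) (Fin (n + 2)) ℝ} {K N : ℝ}

lemma sum_valueCount_sq_le (h : IsJacobiDecomposition B g T)
    (hK : ∀ M : ℤ, (M : ℝ) ≤ g 0 ^ 2 * g 1 * N → ∀ S : Finset (ℤ√(-schurComplement B 0 0)),
      (∀ z ∈ S, z.norm = M) → (S.card : ℝ) ≤ K)
    {s : Finset ℤ} (hs : ∀ m ∈ s, (m : ℝ) ≤ N) :
    ∑ m ∈ s, (valueCount B m : ℝ) ^ 2 ≤
      (K * ∏ i : Fin n, sideBound N (g i.succ.succ)) * ∏ i, sideBound N (g i) := by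
  have hlevel : ∀ m : ℤ, (m : ℝ) ≤ N →
      (valueCount B m : ℝ) ≤ K * ∏ i : Fin n, sideBound N (g i.succ.succ) := fun m hm ↦ by
    rw [h.valueCount_eq_card hm]
    exact h.card_le_mul_prod_sideBound hK hm fun x hx ↦ (Finset.mem_filter.mp hx).2
  calc ∑ m ∈ s, (valueCount B m : ℝ) ^ 2
      ≤ ∑ m ∈ s, (K * ∏ i : Fin n, sideBound N (g i.succ.succ)) * valueCount B m :=
        Finset.sum_le_sum fun m hm ↦
          (sq _).trans_le (mul_le_mul_of_nonneg_right (hlevel m (hs m hm)) (Nat.cast_nonneg _))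
    _ = (K * ∏ i : Fin n, sideBound N (g i.succ.succ)) * ∑ m ∈ s, (valueCount B m : ℝ) :=
        (Finset.mul_sum _ _ _).symm
    _ ≤ _ := mul_le_mul_of_nonneg_left (h.sum_valueCount_le hs)
        ((Nat.cast_nonneg _).trans (hlevel ⌊N⌋ (Int.floor_le N)))

end IsJacobiDecomposition

end ValueCount

/-! ### Quaternary forms -/

section Quaternary

open Matrix

lemma two_mul_Qval_eq_dotProduct_mulVec {A : Matrix (Fin 4) (Fin 4) ℤ} (hA : IsGram A)
    (x : Fin 4 → ℤ) : 2 * Qval A x = x ⬝ᵥ A *ᵥ x := by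
  have hdiag : ∀ i, 2 * (A i i / 2) = A i i := fun i ↦ Int.mul_ediv_cancel' (hA.2 i)
  have hoff : ∀ i, ∑ j ∈ Finset.Ioi i, A i j * (x i * x j) =
      ∑ j, if i < j then A i j * (x i * x j) else 0 := fun i ↦ by
    rw [← Finset.sum_filter]
    congr 1
    ext
    simp
  simp only [Qval, Int.cast_id, hoff]
  simp only [Fin.sum_univ_four, Fin.isValue, not_lt_zero, ↓reduceIte, Fin.lt_one_iff, zero_add,
    Fin.reduceLT, one_ne_zero, Fin.reduceEq, lt_self_iff_false, add_zero, dotProduct, mulVec,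
    hA.1.apply 0 1, hA.1.apply 0 2, hA.1.apply 1 2, hA.1.apply 0 3, hA.1.apply 1 3, hA.1.apply 2 3]
  linear_combination x 0 ^ 2 * hdiag 0 + x 1 ^ 2 * hdiag 1 + x 2 ^ 2 * hdiag 2 + x 3 ^ 2 * hdiag 3

lemma repCount_eq_valueCount {A : Matrix (Fin 4) (Fin 4) ℤ} (hA : IsGram A) (n : ℕ) :
    repCount A n = valueCount A (2 * n) := by
  refine Nat.card_congr (Equiv.subtypeEquivRight fun x ↦ ?_)
  rw [Set.mem_ofPred_eq, ← two_mul_Qval_eq_dotProduct_mulVec hA]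
  exact (mul_right_inj' two_ne_zero).symm

variable {g : Fin 4 → ℝ} {N : ℝ}

namespace IsHermiteReduced

lemma three_quarters_mul_le (hg : IsHermiteReduced g) :
    3 / 4 * g 0 ≤ g 1 ∧ 3 / 4 * g 1 ≤ g 2 ∧ 3 / 4 * g 2 ≤ g 3 :=
  ⟨hg 0 1 rfl, hg 1 2 rfl, hg 2 3 rfl⟩

lemma sq_mul_le_prod (hg : IsHermiteReduced g) (hg0 : 1 ≤ g 0) :
    g 0 ^ 2 * g 1 ≤ 9 / 2 * ∏ i, g i := by
  obtain ⟨h01, h12, h23⟩ := hg.three_quarters_mul_le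
  have hg1 : 0 < g 1 := by linarith
  have hg3 : 27 / 64 ≤ g 3 := by linarith
  have htail : 9 / 16 * g 0 * (27 / 64) ≤ g 2 * g 3 :=
    mul_le_mul (by linarith) hg3 (by norm_num) (by linarith)
  calc g 0 ^ 2 * g 1 = g 0 * g 1 * g 0 := by ring
    _ ≤ g 0 * g 1 * (9 / 2 * (g 2 * g 3)) :=
        mul_le_mul_of_nonneg_left (by linarith) (by positivity)
    _ = 9 / 2 * ∏ i, g i := by rw [Fin.prod_univ_four]; ring

lemma prod_rpow_three_quarters_le (hg : IsHermiteReduced g) (hpos : ∀ i, 0 < g i) :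
    (∏ i, g i) ^ (3 / 4 : ℝ) ≤ 4 / 3 * (g 2 * g 3 * √(g 0 * g 1)) := by
  obtain ⟨h01, h12, h23⟩ := hg.three_quarters_mul_le
  have hD : 0 ≤ ∏ i, g i := Finset.prod_nonneg fun i _ ↦ (hpos i).le
  have h0 := hpos 0
  have h1 := hpos 1
  have h2 := hpos 2
  have h3 := hpos 3
  have hhalves : 9 / 16 * g 0 * (9 / 16 * g 1) ≤ g 2 * g 3 :=
    mul_le_mul (by linarith) (by linarith) (by positivity) h2.le
  refine le_of_pow_le_pow_left₀ four_ne_zero (by positivity) ?_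
  calc ((∏ i, g i) ^ (3 / 4 : ℝ)) ^ 4 = (∏ i, g i) ^ 3 := by
        rw [← Real.rpow_mul_natCast hD, ← Real.rpow_natCast _ 3]
        norm_num
    _ = g 0 * g 1 * ((g 0 * g 1) ^ 2 * (g 2 * g 3) ^ 3) := by rw [Fin.prod_univ_four]; ring
    _ ≤ 256 / 81 * (g 2 * g 3) * ((g 0 * g 1) ^ 2 * (g 2 * g 3) ^ 3) :=
        mul_le_mul_of_nonneg_right (by linarith) (by positivity)
    _ = 256 / 81 * (g 2 * g 3) ^ 4 * (√(g 0 * g 1) ^ 2) ^ 2 := by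
        rw [Real.sq_sqrt (by positivity)]
        ring
    _ = (4 / 3 * (g 2 * g 3 * √(g 0 * g 1))) ^ 4 := by ring

end IsHermiteReduced

lemma sideBound_le_four_mul_sqrt {a : ℝ} (ha : 0 < a) (haN : a ≤ 4 * N) :
    sideBound N a ≤ 4 * √(N / a) := by
  have hhalf : 1 / 2 ≤ √(N / a) :=
    Real.le_sqrt_of_sq_le ((le_div_iff₀ ha).mpr (by linarith))
  unfold sideBound
  linarith

lemma sideBound_le_five_mul_sqrt {a : ℝ} (hN : 1 ≤ N) (ha : 27 / 64 ≤ a) :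
    sideBound N a ≤ 5 * √N := by
  have hone : 1 ≤ √N := Real.one_le_sqrt.mpr hN
  have hle : √(N / a) ≤ 2 * √N := by
    rw [Real.sqrt_le_left (by positivity), mul_pow, Real.sq_sqrt (by positivity),
      div_le_iff₀ (by linarith)]
    nlinarith
  unfold sideBound
  linarith

lemma sideBound_le_three {a : ℝ} (ha : 0 < a) (hNa : N ≤ a) : sideBound N a ≤ 3 := by
  have hle : √(N / a) ≤ 1 := Real.sqrt_le_one.mpr ((div_le_one ha).mpr hNa)
  unfold sideBound
  linarith

lemma sqrt_div_mul_sqrt_div {a b : ℝ} (hN : 0 ≤ N) (ha : 0 ≤ a) :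
    √(N / a) * √(N / b) = N / √(a * b) := by
  rw [Real.sqrt_div hN, Real.sqrt_div hN, Real.sqrt_mul ha, div_mul_div_comm,
    Real.mul_self_sqrt hN]

lemma prod_sideBound_eq (N : ℝ) (g : Fin 4 → ℝ) :
    (∏ i : Fin 2, sideBound N (g i.succ.succ)) * ∏ i, sideBound N (g i) =
      sideBound N (g 0) * sideBound N (g 1) * (sideBound N (g 2) ^ 2 * sideBound N (g 3) ^ 2) := by
  rw [Fin.prod_univ_two, Fin.prod_univ_four]
  change sideBound N (g 2) * sideBound N (g 3) * _ = _
  ring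

namespace IsHermiteReduced

lemma prod_sideBound_le_of_le (hg : IsHermiteReduced g) (hpos : ∀ i, 0 < g i) (hN : g 3 ≤ N) :
    (∏ i : Fin 2, sideBound N (g i.succ.succ)) * ∏ i, sideBound N (g i) ≤
      5625 * (N ^ 3 * (∏ i, g i) ^ (-(3 : ℝ) / 4)) := by
  obtain ⟨h01, h12, h23⟩ := hg.three_quarters_mul_le
  have hpos₀ := hpos 0
  have hpos₁ := hpos 1
  have hpos₂ := hpos 2
  have hpos₃ := hpos 3
  have hN_pos : 0 < N := hpos₃.trans_le hN
  have hD : 0 < ∏ i, g i := Finset.prod_pos fun i _ ↦ hpos i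
  have hside : ∀ i, sideBound N (g i) ≤ 4 * √(N / g i) := fun i ↦
    sideBound_le_four_mul_sqrt (hpos i) (by fin_cases i <;> dsimp <;> linarith)
  have hinv : (g 2 * g 3 * √(g 0 * g 1))⁻¹ ≤ 4 / 3 * (∏ i, g i) ^ (-(3 : ℝ) / 4) := by
    rw [neg_div, Real.rpow_neg hD.le, inv_le_comm₀ (by positivity) (by positivity), mul_inv,
      inv_inv, inv_mul_le_iff₀ (by norm_num)]
    exact hg.prod_rpow_three_quarters_le hpos
  calc (∏ i : Fin 2, sideBound N (g i.succ.succ)) * ∏ i, sideBound N (g i)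
      = sideBound N (g 0) * sideBound N (g 1) * (sideBound N (g 2) ^ 2 * sideBound N (g 3) ^ 2) :=
        prod_sideBound_eq N g
    _ ≤ 4 * √(N / g 0) * (4 * √(N / g 1)) * ((4 * √(N / g 2)) ^ 2 * (4 * √(N / g 3)) ^ 2) := by
        gcongr <;> first | exact sideBound_nonneg N _ | exact hside _
    _ = 4096 * (√(N / g 0) * √(N / g 1) * (√(N / g 2) ^ 2 * √(N / g 3) ^ 2)) := by ring
    _ = 4096 * (N ^ 3 * (g 2 * g 3 * √(g 0 * g 1))⁻¹) := by
        rw [sqrt_div_mul_sqrt_div hN_pos.le hpos₀.le, Real.sq_sqrt (by positivity),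
          Real.sq_sqrt (by positivity)]
        field_simp
    _ ≤ 4096 * (N ^ 3 * (4 / 3 * (∏ i, g i) ^ (-(3 : ℝ) / 4))) := by gcongr
    _ ≤ 5625 * (N ^ 3 * (∏ i, g i) ^ (-(3 : ℝ) / 4)) := by
        rw [mul_left_comm (N ^ 3), ← mul_assoc]
        gcongr
        norm_num

lemma prod_sideBound_le_of_ge (hg : IsHermiteReduced g) (hg0 : 1 ≤ g 0) (hN : 1 ≤ N)
    (hN3 : N ≤ g 3) :
    (∏ i : Fin 2, sideBound N (g i.succ.succ)) * ∏ i, sideBound N (g i) ≤ 5625 * N ^ 2 := by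
  obtain ⟨h01, h12, _⟩ := hg.three_quarters_mul_le
  have hside₀ : sideBound N (g 0) ≤ 5 * √N := sideBound_le_five_mul_sqrt hN (by linarith)
  have hside₁ : sideBound N (g 1) ≤ 5 * √N := sideBound_le_five_mul_sqrt hN (by linarith)
  have hside₂ : sideBound N (g 2) ≤ 5 * √N := sideBound_le_five_mul_sqrt hN (by linarith)
  have hside₃ : sideBound N (g 3) ≤ 3 := sideBound_le_three (by linarith) hN3
  calc (∏ i : Fin 2, sideBound N (g i.succ.succ)) * ∏ i, sideBound N (g i)
      = sideBound N (g 0) * sideBound N (g 1) * (sideBound N (g 2) ^ 2 * sideBound N (g 3) ^ 2) :=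
        prod_sideBound_eq N g
    _ ≤ 5 * √N * (5 * √N) * ((5 * √N) ^ 2 * 3 ^ 2) := by
        gcongr <;> exact sideBound_nonneg N _
    _ = 5625 * (√N ^ 2) ^ 2 := by ring
    _ = 5625 * N ^ 2 := by rw [Real.sq_sqrt (zero_le_one.trans hN)]

lemma prod_sideBound_le (hg : IsHermiteReduced g) (hpos : ∀ i, 0 < g i) (hg0 : 1 ≤ g 0)
    (hN : 1 ≤ N) :
    (∏ i : Fin 2, sideBound N (g i.succ.succ)) * ∏ i, sideBound N (g i) ≤
      5625 * (N ^ 3 * (∏ i, g i) ^ (-(3 : ℝ) / 4) + N ^ 2) := by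
  have hcube : 0 ≤ N ^ 3 * (∏ i, g i) ^ (-(3 : ℝ) / 4) :=
    mul_nonneg (by positivity) (Real.rpow_nonneg (Finset.prod_nonneg fun i _ ↦ (hpos i).le) _)
  rcases le_total (g 3) N with h3 | h3
  · linarith [hg.prod_sideBound_le_of_le hpos h3, sq_nonneg N]
  · linarith [hg.prod_sideBound_le_of_ge hg0 hN h3]

end IsHermiteReduced

theorem exists_sum_valueCount_sq_le {ε : ℝ} (hε : 0 < ε) :
    ∃ C : ℝ, 0 < C ∧ ∀ {A : Matrix (Fin 4) (Fin 4) ℤ}, A.PosDef → ∀ {N : ℝ}, 1 ≤ N →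
      ∀ s : Finset ℤ, (∀ m ∈ s, (m : ℝ) ≤ N) → ∑ m ∈ s, (valueCount A m : ℝ) ^ 2 ≤
        C * (N * A.det) ^ ε * (N ^ 3 * (A.det : ℝ) ^ (-(3 : ℝ) / 4) + N ^ 2) := by
  obtain ⟨C, hC, hnorm⟩ := exists_card_norm_eq_le_mul_rpow hε
  refine ⟨C * (9 / 2) ^ ε * 5625, by positivity, fun {A} hA {N} hN s hs ↦ ?_⟩
  obtain ⟨B, g, T, hAB, hJ, hg⟩ := exists_reduced_jacobiDecomposition hA
  have hdet : (A.det : ℝ) = ∏ i, g i := by rw [← hAB.det_eq, hJ.det_eq]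
  have hdet_pos : (0 : ℝ) < A.det := hdet ▸ Finset.prod_pos fun i _ ↦ hJ.pos i
  have hdet_one : (1 : ℝ) ≤ A.det := by exact_mod_cast hdet_pos
  have hg0 : 1 ≤ g 0 := by
    have hpos := hJ.pos 0
    rw [← hJ.apply_zero_zero] at hpos ⊢
    exact_mod_cast hpos
  have hNdet : 1 ≤ N * A.det := one_le_mul_of_one_le_of_one_le hN hdet_one
  have hscale : g 0 ^ 2 * g 1 * N ≤ 9 / 2 * (N * A.det) := by
    rw [hdet, mul_comm N, ← mul_assoc]
    exact mul_le_mul_of_nonneg_right (hg.sq_mul_le_prod hg0) (zero_le_one.trans hN)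
  calc ∑ m ∈ s, (valueCount A m : ℝ) ^ 2 = ∑ m ∈ s, (valueCount B m : ℝ) ^ 2 := by
        simp only [hAB.valueCount_eq]
    _ ≤ (C * (9 / 2 * (N * A.det)) ^ ε * ∏ i : Fin 2, sideBound N (g i.succ.succ)) *
          ∏ i, sideBound N (g i) :=
        hJ.sum_valueCount_sq_le (fun M hM S hS ↦ hnorm
          (neg_lt_zero.mpr hJ.schurComplement_zero_zero_pos) (by linarith) (hM.trans hscale) S hS)
          hs
    _ ≤ C * (9 / 2 * (N * A.det)) ^ ε *
          (5625 * (N ^ 3 * (A.det : ℝ) ^ (-(3 : ℝ) / 4) + N ^ 2)) := by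
        rw [mul_assoc, hdet]
        exact mul_le_mul_of_nonneg_left (hg.prod_sideBound_le hJ.pos hg0 hN)
          (by rw [← hdet]; positivity)
    _ = C * (9 / 2) ^ ε * 5625 * (N * A.det) ^ ε *
          (N ^ 3 * (A.det : ℝ) ^ (-(3 : ℝ) / 4) + N ^ 2) := by
        rw [Real.mul_rpow (by norm_num) (zero_le_one.trans hNdet)]
        ring

theorem repCount_sq_sum_bound_general :
    ∀ ε : ℝ, 0 < ε → ∃ C : ℝ, 0 < C ∧
      ∀ (A : Matrix (Fin 4) (Fin 4) ℤ) (x : ℝ),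
        IsGram A → PosDefQF A → 1 ≤ x →
        (∑ n ∈ Finset.Icc 1 ⌊x⌋₊, ((repCount A n : ℝ)) ^ 2) ≤
          C * (x * (A.det : ℝ)) ^ ε *
            (x ^ (3:ℝ) * (A.det : ℝ) ^ (-(3:ℝ)/4) + x ^ (2:ℝ)) := by
  intro ε hε
  obtain ⟨C, hC, hbound⟩ := exists_sum_valueCount_sq_le hε
  refine ⟨C * 2 ^ ε * 8, by positivity, fun A x hA hpos hx ↦ ?_⟩
  have hx0 : 0 ≤ x := zero_le_one.trans hx
  have hdet : (0 : ℝ) < A.det := intCast_det_pos hpos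
  have hle : ∀ m ∈ (Finset.Icc 1 ⌊x⌋₊).image fun n : ℕ ↦ (2 * n : ℤ), (m : ℝ) ≤ 2 * x :=
    Finset.forall_mem_image.mpr fun n hn ↦ by
      push_cast
      linarith [(Nat.le_floor_iff hx0).mp (Finset.mem_Icc.mp hn).2]
  calc ∑ n ∈ Finset.Icc 1 ⌊x⌋₊, (repCount A n : ℝ) ^ 2
      = ∑ m ∈ (Finset.Icc 1 ⌊x⌋₊).image fun n : ℕ ↦ (2 * n : ℤ), (valueCount A m : ℝ) ^ 2 := by
        rw [Finset.sum_image fun a _ b _ h ↦ by simpa using h]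
        simp only [repCount_eq_valueCount hA]
    _ ≤ C * (2 * x * A.det) ^ ε *
          ((2 * x) ^ 3 * (A.det : ℝ) ^ (-(3 : ℝ) / 4) + (2 * x) ^ 2) :=
        hbound (posDef_of_posDef_map_intCast hpos) (by linarith) _ hle
    _ ≤ C * (2 * x * A.det) ^ ε *
          (8 * (x ^ (3 : ℝ) * (A.det : ℝ) ^ (-(3 : ℝ) / 4) + x ^ (2 : ℝ))) := by
        rw [Real.rpow_ofNat, Real.rpow_ofNat]
        gcongr
        linear_combination 4 * sq_nonneg x
    _ = _ := by
        rw [mul_assoc 2 x, Real.mul_rpow zero_le_two (by positivity)]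
        ring

end Quaternary

/-- Mean square bound:
`∑_{1 ≤ n ≤ x} r_R(n)² ≪ (x D(R))^ε (x³ D(R)^{-3/4} + x^{5/2} D(R)^{-1/4} + x²)`. -/
theorem repCount_sq_sum_bound :
    ∀ ε : ℝ, 0 < ε → ∃ C : ℝ, 0 < C ∧
      ∀ (A : Matrix (Fin 4) (Fin 4) ℤ) (x : ℝ),
        IsGram A → PosDefQF A → 1 ≤ x →
        (∑ n ∈ Finset.Icc 1 ⌊x⌋₊, ((repCount A n : ℝ)) ^ 2) ≤
          C * (x * (A.det : ℝ)) ^ ε *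
            (x ^ (3:ℝ) * (A.det : ℝ) ^ (-(3:ℝ)/4) +
             x ^ ((5:ℝ)/2) * (A.det : ℝ) ^ (-(1:ℝ)/4) + x ^ (2:ℝ)) := by
  intro ε hε
  obtain ⟨C, hC, hbound⟩ := repCount_sq_sum_bound_general ε hε
  refine ⟨C, hC, fun A x hA hpos hx ↦ (hbound A x hA hpos hx).trans ?_⟩
  have hdet : 0 < (A.det : ℝ) := intCast_det_pos hpos
  gcongr
  exact le_add_of_nonneg_right (by positivity)
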